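/- Continuum terminated convergence. Let ω be a regular averaging kernel and (hf, hg) ∈ 𝒳² with Φ(hf, hg; u, v) > 0 for all (u, v) ∈ [0,1]² with (u, v) ≠ (0,0). Then for the one-sided termination of the continuum spatially coupled recursion with any measurable initial condition f⁰ : ℝ → [0,1], f^t(x) → 0 as t → ∞ for every x ∈ ℝ. Moreover, if hf(x) > 0 and hg(x) > 0 for all x ∈ (0,1], the same conclusion holds under the weaker hypothesis Φ(hf, hg; u, v) ≥ 0 for all (u, v) ∈ [0,1]². -/

import Mathlib

open MeasureTheory Filter Set

noncomputable section

/-- Convolution `(f ⊗ ω)(x) = ∫ y, f y · ω (x − y)`. -/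
def conv (f ω : ℝ → ℝ) (x : ℝ) : ℝ := ∫ y : ℝ, f y * ω (x - y)

/-- `ω` is an averaging kernel: even, nonnegative, of bounded variation, integrating to 1. -/
def IsAveragingKernel (ω : ℝ → ℝ) : Prop :=
  (∀ x, ω (-x) = ω x) ∧ (∀ x, 0 ≤ ω x) ∧ BoundedVariationOn ω Set.univ ∧
    MeasureTheory.Integrable ω ∧ (∫ x : ℝ, ω x) = 1

/-- The essential supremum `‖ω‖∞` of a kernel, as a real number. -/
def kerSup (ω : ℝ → ℝ) : ℝ := (eLpNorm ω ⊤ MeasureTheory.volume).toReal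

/-- `ω` is regular: for some `W ∈ (0,∞]`, it vanishes outside `[−W, W]` and is
positive on `(−W, W)` (the case `W = ∞` being that `ω` is everywhere positive). -/
def IsRegularKernel (ω : ℝ → ℝ) : Prop :=
  (∀ x, 0 < ω x) ∨
    ∃ W : ℝ, 0 < W ∧ (∀ x, W < |x| → ω x = 0) ∧ (∀ x, |x| < W → 0 < ω x)

/-- Membership in `𝒳`: nondecreasing self-maps of `[0,1]`. -/
def MemX (h : ℝ → ℝ) : Prop :=
  MonotoneOn h (Icc 0 1) ∧ MapsTo h (Icc 0 1) (Icc 0 1)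

/-- Left limit `h(u−)` of `h ∈ 𝒳` at `u ∈ [0,1]`, with the convention `h(0−) = 0`. -/
def lm (h : ℝ → ℝ) (u : ℝ) : ℝ := if u ≤ 0 then 0 else sSup (h '' Ico 0 u)

/-- Right limit `h(u+)` of `h ∈ 𝒳` at `u ∈ [0,1]`, with the convention `h(1+) = 1`. -/
def rm (h : ℝ → ℝ) (u : ℝ) : ℝ := if 1 ≤ u then 1 else sInf (h '' Ioc u 1)

/-- A canonical generalized inverse of `h ∈ 𝒳` (any valid inverse has the same integrals,
so the potential below is unambiguous). -/
def Xinv (h : ℝ → ℝ) (v : ℝ) : ℝ := sInf ({1} ∪ {u ∈ Icc (0:ℝ) 1 | v ≤ h u})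

/-- The potential `Φ(hf, hg; u, v) = ∫₀ᵘ hg⁻¹ + ∫₀ᵛ hf⁻¹ − u·v`. -/
def Pot (hf hg : ℝ → ℝ) (u v : ℝ) : ℝ :=
  (∫ x in (0:ℝ)..u, Xinv hg x) + (∫ x in (0:ℝ)..v, Xinv hf x) - u * v

/-- `A(hf, hg) = Φ(hf, hg; 1, 1)`. -/
def Agap (hf hg : ℝ → ℝ) : ℝ := Pot hf hg 1 1

/-- `(u,v)` is a crossing point of `(hf, hg)`:
`u ∈ [hg(v−), hg(v+)]` and `v ∈ [hf(u−), hf(u+)]`. -/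
def IsCrossing (hf hg : ℝ → ℝ) (u v : ℝ) : Prop :=
  u ∈ Icc (0:ℝ) 1 ∧ v ∈ Icc (0:ℝ) 1 ∧
    u ∈ Icc (lm hg v) (rm hg v) ∧ v ∈ Icc (lm hf u) (rm hf u)

/-- The strictly positive gap condition: there is a nontrivial crossing point, and every
nontrivial crossing point satisfies `Φ(hf, hg; u, v) > max {0, A(hf, hg)}`. -/
def StrictPosGap (hf hg : ℝ → ℝ) : Prop :=
  (∃ u v, IsCrossing hf hg u v ∧ ¬(u = 0 ∧ v = 0) ∧ ¬(u = 1 ∧ v = 1)) ∧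
    ∀ u v, IsCrossing hf hg u v → ¬(u = 0 ∧ v = 0) → ¬(u = 1 ∧ v = 1) →
      max 0 (Agap hf hg) < Pot hf hg u v

/-- Membership in `Ψ`: nondecreasing functions `ℝ → [0,1]`. -/
def MemPsi (f : ℝ → ℝ) : Prop := Monotone f ∧ ∀ x, f x ∈ Icc (0:ℝ) 1

/-- `f` is `(a,b)`-interpolating: limits `a` at `−∞` and `b` at `+∞`. -/
def Interpolates (f : ℝ → ℝ) (a b : ℝ) : Prop :=
  Filter.Tendsto f Filter.atBot (nhds a) ∧ Filter.Tendsto f Filter.atTop (nhds b)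

/-!
The orbit started from the constant `1` dominates every other orbit, and it decreases to a pair
`(F, G)` of monotone profiles with `F = 0` on `(-∞, 0)` which is a fixed point of the terminated
recursion up to the values of `hf` and `hg` at their jumps. Let `φ` and `γ` be the limits of `F`
and `G` at `+∞`.

Averaging is self-adjoint because `ω` is even, so summation by parts for the forward differences
of step `δ` expresses `δ φ γ` through the two integrals of `(F ⊗ ω)(x + δ) (G (x + δ) - G x)` and
`(G ⊗ ω) x (F (x + δ) - F x)`. Since `hg⁻¹ (G x) ≤ (F ⊗ ω) x` everywhere and
`hf⁻¹ (F x) ≤ (G ⊗ ω) x` on `[0, ∞)`, the integrals dominate `δ ∫₀^γ hg⁻¹` and `δ ∫₀^φ hf⁻¹`, up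
to an error `o(δ)` that comes from the `L¹`-continuity of translations of `ω`. The jump of `F` at
the origin even gives a surplus `δ ((G ⊗ ω) 0 * F 0 - ∫₀^{F 0} hf⁻¹)`. Dividing by `δ → 0`,
`Φ(γ, φ) ≤ -((G ⊗ ω) 0 * F 0 - ∫₀^{F 0} hf⁻¹) ≤ 0`.

If `Φ > 0` off the origin, this forces `φ = 0`, hence `F = 0`. If only `Φ ≥ 0` but `hf` and `hg`
are positive on `(0, 1]`, the surplus would be positive unless `F 0 = 0`, and the fixed point
equations then propagate the zero of `F` to the right by steps of a fixed length.
-/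

section ForwardDifference

variable {H : ℝ → ℝ} {a b δ : ℝ}

lemma fwdDiff_nonneg_of_monotone (hH : Monotone H) (hδ : 0 ≤ δ) (x : ℝ) : 0 ≤ fwdDiff δ H x :=
  sub_nonneg.2 (hH (le_add_of_nonneg_right hδ))

lemma intervalIntegrable_fwdDiff_of_monotone (hH : Monotone H) (s t : ℝ) :
    IntervalIntegrable (fwdDiff δ H) volume s t :=
  Monotone.intervalIntegrable (fun _ _ hxy => hH (add_le_add_left hxy δ))
    |>.sub hH.intervalIntegrable

lemma intervalIntegral_fwdDiff_of_monotone (hH : Monotone H) (s t : ℝ) :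
    ∫ x in s..t, fwdDiff δ H x = (∫ x in t..t + δ, H x) - ∫ x in s..s + δ, H x := by
  have hint : ∀ c d, IntervalIntegrable H volume c d := fun _ _ => hH.intervalIntegrable
  have hshift : IntervalIntegrable (fun x => H (x + δ)) volume s t :=
    Monotone.intervalIntegrable fun _ _ hxy => hH (add_le_add_left hxy δ)
  simp only [fwdDiff]
  rw [intervalIntegral.integral_sub hshift (hint _ _), intervalIntegral.integral_comp_add_right]
  linarith [intervalIntegral.integral_add_adjacent_intervals (hint s (s + δ)) (hint _ (t + δ)),
    intervalIntegral.integral_add_adjacent_intervals (hint s t) (hint t (t + δ))]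

lemma tendsto_intervalIntegral_window_of_monotone {ι : Type*} {l : Filter ι} {u : ι → ℝ} {c : ℝ}
    (hH : Monotone H) (hδ : 0 ≤ δ) (hleft : Tendsto (fun i => H (u i)) l (nhds c))
    (hright : Tendsto (fun i => H (u i + δ)) l (nhds c)) :
    Tendsto (fun i => ∫ x in u i..u i + δ, H x) l (nhds (δ * c)) := by
  have hle : ∀ s, s ≤ s + δ := fun _ => le_add_of_nonneg_right hδ
  refine tendsto_of_tendsto_of_tendsto_of_le_of_le (hleft.const_mul δ) (hright.const_mul δ)
    (fun i => ?_) (fun i => ?_)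
  · simpa using intervalIntegral.integral_mono_on (μ := volume) (hle (u i))
      (intervalIntegrable_const (c := H (u i))) hH.intervalIntegrable (fun x hx => hH hx.1)
  · simpa using intervalIntegral.integral_mono_on (μ := volume) (hle (u i))
      hH.intervalIntegrable (intervalIntegrable_const (c := H (u i + δ))) (fun x hx => hH hx.2)

lemma tendsto_intervalIntegral_fwdDiff_of_monotone (hH : Monotone H) (hlim : Interpolates H a b)
    (hδ : 0 ≤ δ) :
    Tendsto (fun r : ℝ => ∫ x in -r..r, fwdDiff δ H x) atTop (nhds (δ * (b - a))) := by
  simp only [intervalIntegral_fwdDiff_of_monotone hH, mul_sub]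
  exact (tendsto_intervalIntegral_window_of_monotone hH hδ hlim.2
      (hlim.2.comp (tendsto_atTop_add_const_right _ δ tendsto_id))).sub
    (tendsto_intervalIntegral_window_of_monotone hH hδ (hlim.1.comp tendsto_neg_atTop_atBot)
      (hlim.1.comp (tendsto_atBot_add_const_right _ δ tendsto_neg_atTop_atBot)))

lemma integrable_fwdDiff_of_monotone (hH : Monotone H) (hlim : Interpolates H a b) (hδ : 0 ≤ δ) :
    Integrable (fwdDiff δ H) := by
  refine integrable_of_intervalIntegral_norm_tendsto (δ * (b - a))
    (fun r => (intervalIntegrable_fwdDiff_of_monotone hH (-r) r).1) tendsto_neg_atTop_atBot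
    tendsto_id ?_
  simpa only [Real.norm_of_nonneg (fwdDiff_nonneg_of_monotone hH hδ _), id] using
    tendsto_intervalIntegral_fwdDiff_of_monotone hH hlim hδ

lemma integral_fwdDiff_of_monotone (hH : Monotone H) (hlim : Interpolates H a b) (hδ : 0 ≤ δ) :
    ∫ x, fwdDiff δ H x = δ * (b - a) :=
  tendsto_nhds_unique
    (intervalIntegral_tendsto_integral (integrable_fwdDiff_of_monotone hH hlim hδ)
      tendsto_neg_atTop_atBot tendsto_id)
    (tendsto_intervalIntegral_fwdDiff_of_monotone hH hlim hδ)

end ForwardDifference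

section Translation

variable {ω : ℝ → ℝ}

lemma tendsto_integral_abs_fwdDiff_zero (hω : Integrable ω) :
    Tendsto (fun δ => ∫ x, |fwdDiff δ ω x|) (nhds 0) (nhds 0) := by
  have : Fact ((1 : ENNReal) ≠ ⊤) := ⟨ENNReal.one_ne_top⟩
  have hmem : MemLp ω 1 := memLp_one_iff_integrable.2 hω
  have hcont : Tendsto (fun δ : ℝ => DomAddAct.mk δ +ᵥ hmem.toLp ω) (nhds 0)
      (nhds (DomAddAct.mk (0 : ℝ) +ᵥ hmem.toLp ω)) :=
    (DomAddAct.continuous_mk.vadd continuous_const).tendsto 0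
  have hnorm : ∀ δ : ℝ,
      ‖(DomAddAct.mk δ +ᵥ hmem.toLp ω) - hmem.toLp ω‖ = ∫ x, |fwdDiff δ ω x| := by
    intro δ
    rw [DomAddAct.mk_vadd_toLp, ← MemLp.toLp_sub, L1.norm_eq_integral_norm]
    refine integral_congr_ae ?_
    filter_upwards [MemLp.coeFn_toLp (f := (fun x => ω (δ +ᵥ x)) - ω)
      ((hmem.comp_measurePreserving (measurePreserving_vadd δ volume)).sub hmem)] with x hx
    rw [hx, Real.norm_eq_abs]
    simp only [Pi.sub_apply, vadd_eq_add, fwdDiff, add_comm]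
  simpa only [hnorm, DomAddAct.mk_zero, zero_vadd, sub_self, norm_zero] using
    (hcont.sub_const (hmem.toLp ω)).norm

end Translation

/-- A symmetric probability density on `ℝ`: an averaging kernel without the requirement of bounded
variation. -/
structure IsSymmetricDensity (ω : ℝ → ℝ) : Prop where
  even : Function.Even ω
  nonneg : ∀ x, 0 ≤ ω x
  integrable : Integrable ω
  integral_eq_one : ∫ x, ω x = 1

lemma IsAveragingKernel.isSymmetricDensity {ω : ℝ → ℝ} (hω : IsAveragingKernel ω) :
    IsSymmetricDensity ω :=
  ⟨hω.1, hω.2.1, hω.2.2.2.1, hω.2.2.2.2⟩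

/-- A measurable function `ℝ → [0,1]`, the state space of the recursion; the monotone profiles are
those satisfying `MemPsi`. -/
structure IsProfile (p : ℝ → ℝ) : Prop where
  measurable : Measurable p
  mem_Icc : ∀ x, p x ∈ Icc (0 : ℝ) 1

lemma MemPsi.isProfile {p : ℝ → ℝ} (hp : MemPsi p) : IsProfile p :=
  ⟨hp.1.measurable, hp.2⟩

section Convolution

variable {p q ω : ℝ → ℝ}

lemma isProfile_const {c : ℝ} (hc : c ∈ Icc (0 : ℝ) 1) : IsProfile fun _ => c :=
  ⟨measurable_const, fun _ => hc⟩

lemma IsProfile.comp_add (hp : IsProfile p) (c : ℝ) : IsProfile fun x => p (x + c) :=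
  ⟨hp.measurable.comp (measurable_add_const c), fun _ => hp.mem_Icc _⟩

lemma IsProfile.norm_le_one (hp : IsProfile p) (x : ℝ) : ‖p x‖ ≤ 1 := by
  rw [Real.norm_of_nonneg (hp.mem_Icc x).1]
  exact (hp.mem_Icc x).2

lemma IsProfile.integrable_mul (hp : IsProfile p) (hq : Integrable q) :
    Integrable fun x => p x * q x :=
  hq.bdd_mul hp.measurable.aestronglyMeasurable (Eventually.of_forall hp.norm_le_one)

lemma conv_eq_integral_sub_left (p ω : ℝ → ℝ) (x : ℝ) : conv p ω x = ∫ y, p (x - y) * ω y := by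
  rw [conv, ← integral_sub_left_eq_self _ volume x]
  simp only [sub_sub_cancel]

lemma conv_comp_add (p ω : ℝ → ℝ) (c x : ℝ) :
    conv (fun z => p (z + c)) ω x = conv p ω (x + c) := by
  simp only [conv_eq_integral_sub_left, sub_add_eq_add_sub]

lemma conv_const (hω : IsSymmetricDensity ω) (c x : ℝ) : conv (fun _ => c) ω x = c := by
  rw [conv_eq_integral_sub_left, integral_const_mul, hω.integral_eq_one, mul_one]

lemma IsProfile.integrable_mul_sub (hp : IsProfile p) (hω : Integrable ω) (x : ℝ) :
    Integrable fun y => p y * ω (x - y) :=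
  hp.integrable_mul (hω.comp_sub_left x)

lemma conv_fwdDiff (hp : IsProfile p) (hω : Integrable ω) (δ : ℝ) :
    conv (fwdDiff δ p) ω = fwdDiff δ (conv p ω) := by
  ext x
  calc conv (fwdDiff δ p) ω x
      = ∫ y, (p (y + δ) * ω (x - y) - p y * ω (x - y)) := by simp only [conv, fwdDiff, sub_mul]
    _ = conv (fun y => p (y + δ)) ω x - conv p ω x :=
        integral_sub ((hp.comp_add δ).integrable_mul_sub hω x) (hp.integrable_mul_sub hω x)
    _ = fwdDiff δ (conv p ω) x := by rw [conv_comp_add, fwdDiff]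

lemma abs_fwdDiff_conv_le (hp : IsProfile p) (hω : Integrable ω) (δ x : ℝ) :
    |fwdDiff δ (conv p ω) x| ≤ ∫ y, |fwdDiff δ ω y| := by
  have hdiff : fwdDiff δ (conv p ω) x = ∫ y, p y * fwdDiff δ ω (x - y) := by
    simp only [fwdDiff, mul_sub, conv, ← sub_add_eq_add_sub]
    refine (integral_sub ?_ (hp.integrable_mul_sub hω x)).symm
    simpa only [← sub_add_eq_add_sub] using hp.integrable_mul_sub hω (x + δ)
  rw [hdiff, ← Real.norm_eq_abs,
    ← integral_sub_left_eq_self (fun y => |fwdDiff δ ω y|) volume x]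
  refine norm_integral_le_of_norm_le
    (((hω.comp_add_right δ).sub hω).abs.comp_sub_left x) (Eventually.of_forall fun y => ?_)
  rw [norm_mul]
  exact mul_le_of_le_one_left (norm_nonneg _) (hp.norm_le_one y)

lemma continuous_conv (hp : IsProfile p) (hω : Integrable ω) : Continuous (conv p ω) := by
  refine continuous_iff_continuousAt.2 fun x => ?_
  have hdiff : Tendsto (fun δ => fwdDiff δ (conv p ω) x) (nhds 0) (nhds 0) :=
    squeeze_zero_norm (abs_fwdDiff_conv_le hp hω · x) (tendsto_integral_abs_fwdDiff_zero hω)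
  rw [ContinuousAt, ← map_add_left_nhds_zero, tendsto_map'_iff]
  simpa [fwdDiff, Function.comp_def] using hdiff.add_const (conv p ω x)

lemma conv_le_conv (hω : IsSymmetricDensity ω) (hp : IsProfile p) (hq : IsProfile q)
    (hpq : p ≤ q) (x : ℝ) : conv p ω x ≤ conv q ω x :=
  integral_mono (hp.integrable_mul_sub hω.integrable x) (hq.integrable_mul_sub hω.integrable x)
    fun y => mul_le_mul_of_nonneg_right (hpq y) (hω.nonneg _)

lemma IsProfile.conv (hω : IsSymmetricDensity ω) (hp : IsProfile p) : IsProfile (conv p ω) where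
  measurable := (continuous_conv hp hω.integrable).measurable
  mem_Icc x :=
    ⟨conv_const hω 0 x ▸ conv_le_conv hω (isProfile_const ⟨le_rfl, zero_le_one⟩) hp
        (fun y => (hp.mem_Icc y).1) x,
      conv_const hω 1 x ▸ conv_le_conv hω hp (isProfile_const ⟨zero_le_one, le_rfl⟩)
        (fun y => (hp.mem_Icc y).2) x⟩

lemma MemPsi.conv (hω : IsSymmetricDensity ω) (hp : MemPsi p) : MemPsi (conv p ω) := by
  refine ⟨fun x z hxz => ?_, (hp.isProfile.conv hω).mem_Icc⟩
  have hle := conv_le_conv hω hp.isProfile (hp.isProfile.comp_add (z - x))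
    (fun y => hp.1 (le_add_of_nonneg_right (sub_nonneg.2 hxz))) x
  rwa [conv_comp_add, add_sub_cancel] at hle

lemma tendsto_conv {ι : Type*} {l : Filter ι} [l.IsCountablyGenerated] {u : ι → ℝ → ℝ}
    (hω : Integrable ω) (hu : ∀ i, IsProfile (u i))
    (hlim : ∀ y, Tendsto (fun i => u i y) l (nhds (p y))) (x : ℝ) :
    Tendsto (fun i => conv (u i) ω x) l (nhds (conv p ω x)) := by
  refine tendsto_integral_filter_of_dominated_convergence (fun y => ‖ω (x - y)‖)
    (Eventually.of_forall fun i => ((hu i).integrable_mul_sub hω x).aestronglyMeasurable)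
    (Eventually.of_forall fun i => Eventually.of_forall fun y => ?_)
    (hω.comp_sub_left x).norm (Eventually.of_forall fun y => (hlim y).mul_const _)
  rw [norm_mul]
  exact mul_le_of_le_one_left (norm_nonneg _) ((hu i).norm_le_one y)

lemma tendsto_conv_of_tendsto {l : Filter ℝ} [l.IsCountablyGenerated] {c : ℝ}
    (hω : IsSymmetricDensity ω) (hp : IsProfile p)
    (hlim : ∀ y, Tendsto (fun x => p (y + x)) l (nhds c)) :
    Tendsto (conv p ω) l (nhds c) := by
  have hshift := tendsto_conv hω.integrable hp.comp_add hlim 0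
  simpa only [conv_const hω, conv_comp_add, zero_add] using hshift

lemma Interpolates.conv {a b : ℝ} (hω : IsSymmetricDensity ω) (hp : IsProfile p)
    (hlim : Interpolates p a b) : Interpolates (conv p ω) a b :=
  ⟨tendsto_conv_of_tendsto hω hp fun y =>
      hlim.1.comp (tendsto_atBot_add_const_left _ y tendsto_id),
    tendsto_conv_of_tendsto hω hp fun y =>
      hlim.2.comp (tendsto_atTop_add_const_left _ y tendsto_id)⟩

lemma integral_conv_mul_eq_integral_mul_conv (hp : IsProfile p) (hq : Integrable q)
    (hω : Integrable ω) (heven : Function.Even ω) :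
    ∫ x, conv p ω x * q x = ∫ x, p x * conv q ω x := by
  have hprod : Integrable (fun z : ℝ × ℝ => p z.1 * (q z.2 * ω (z.1 - z.2)))
      (volume.prod volume) :=
    (hq.convolution_integrand (ContinuousLinearMap.mul ℝ ℝ) hω).bdd_mul
      (hp.measurable.comp measurable_fst).aestronglyMeasurable
      (Eventually.of_forall fun z => hp.norm_le_one z.1)
  calc ∫ x, conv p ω x * q x
      = ∫ x, ∫ y, p y * (q x * ω (y - x)) := by
        refine integral_congr_ae (Eventually.of_forall fun x => ?_)
        simp only [conv, ← integral_mul_const]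
        refine integral_congr_ae (Eventually.of_forall fun y => ?_)
        simp only [← heven (x - y), neg_sub]
        ring
    _ = ∫ y, ∫ x, p y * (q x * ω (y - x)) := (integral_integral_swap hprod).symm
    _ = ∫ x, p x * conv q ω x := by simp only [integral_const_mul, conv]

lemma setIntegral_Ioi_zero_eq_half (hω : IsSymmetricDensity ω) : ∫ y in Ioi 0, ω y = 1 / 2 := by
  have habs : ∀ y, ω |y| = ω y := fun y => by
    rcases abs_choice y with h | h <;> simp [h, hω.even y]
  have hhalf := integral_comp_abs (f := ω)
  simp only [habs, hω.integral_eq_one] at hhalf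
  linarith

lemma exists_pos_setIntegral_Ioi_pos (hω : IsSymmetricDensity ω) :
    ∃ ε > 0, 0 < ∫ y in Ioi ε, ω y := by
  have hcont : Tendsto (fun ε => ∫ y in (0 : ℝ)..ε, ω y) (nhds 0) (nhds 0) := by
    simpa using (intervalIntegral.continuous_primitive
      (fun _ _ => hω.integrable.intervalIntegrable) 0).tendsto 0
  obtain ⟨ε, hlt, hε⟩ := (((hcont.mono_left nhdsWithin_le_nhds).eventually_lt_const
    (one_half_pos (α := ℝ))).and (self_mem_nhdsWithin (s := Ioi (0 : ℝ)))).exists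
  refine ⟨ε, hε, ?_⟩
  have hsplit := intervalIntegral.integral_Ioi_sub_Ioi
    (hω.integrable.integrableOn (s := Ioi 0)) (le_of_lt hε)
  rw [setIntegral_Ioi_zero_eq_half hω] at hsplit
  linarith

lemma mul_setIntegral_Ioi_le_conv (hω : IsSymmetricDensity ω) (hp : MemPsi p) (x ε : ℝ) :
    p (x + ε) * ∫ y in Ioi ε, ω y ≤ conv p ω x := by
  have hint : Integrable fun y => p (x + y) * ω y := by
    simpa only [add_comm x] using (hp.isProfile.comp_add x).integrable_mul hω.integrable
  calc p (x + ε) * ∫ y in Ioi ε, ω y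
      = ∫ y in Ioi ε, p (x + ε) * ω y := (integral_const_mul _ _).symm
    _ ≤ ∫ y in Ioi ε, p (x + y) * ω y :=
        setIntegral_mono_on (hω.integrable.integrableOn.const_mul _) hint.integrableOn
          measurableSet_Ioi fun y hy =>
            mul_le_mul_of_nonneg_right (hp.1 (add_le_add_right (le_of_lt hy) x)) (hω.nonneg y)
    _ ≤ ∫ y, p (x + y) * ω y :=
        setIntegral_le_integral hint
          (Eventually.of_forall fun y => mul_nonneg (hp.2 _).1 (hω.nonneg y))
    _ = conv p ω x := by
        rw [conv_eq_integral_sub_left, ← integral_neg_eq_self fun y => p (x - y) * ω y]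
        simp only [sub_neg_eq_add, hω.even _]

lemma exists_pos_forall_conv_pos (hω : IsSymmetricDensity ω) :
    ∃ ε > 0, ∀ p, MemPsi p → ∀ x, 0 < p (x + ε) → 0 < conv p ω x := by
  obtain ⟨ε, hε, hmass⟩ := exists_pos_setIntegral_Ioi_pos hω
  exact ⟨ε, hε, fun p hp x hpos =>
    (mul_pos hpos hmass).trans_le (mul_setIntegral_Ioi_le_conv hω hp x ε)⟩

end Convolution

section GeneralizedInverse

variable {h : ℝ → ℝ} {u v w : ℝ}

lemma le_rm_of_forall (hv : v ≤ 1) (hle : ∀ s ∈ Ioc u 1, v ≤ h s) : v ≤ rm h u := by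
  unfold rm
  split_ifs with hu
  · exact hv
  · refine le_csInf ⟨h 1, 1, ⟨not_le.1 hu, le_rfl⟩, rfl⟩ ?_
    rintro _ ⟨s, hs, rfl⟩
    exact hle s hs

lemma MemX.le_of_le_rm (hh : MemX h) (hu : 0 ≤ u) (hv : v ≤ rm h u) {s : ℝ} (hs : s ∈ Ioc u 1) :
    v ≤ h s := by
  rw [rm, if_neg (not_le.2 (hs.1.trans_le hs.2))] at hv
  refine hv.trans (csInf_le ⟨0, ?_⟩ ⟨s, hs, rfl⟩)
  rintro _ ⟨t, ht, rfl⟩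
  exact (hh.2 ⟨hu.trans ht.1.le, ht.2⟩).1

lemma MemX.le_rm (hh : MemX h) (hu : u ∈ Icc (0 : ℝ) 1) : h u ≤ rm h u :=
  le_rm_of_forall (hh.2 hu).2 fun _ hs => hh.1 hu ⟨hu.1.trans hs.1.le, hs.2⟩ hs.1.le

lemma bddBelow_Xinv_set (h : ℝ → ℝ) (v : ℝ) :
    BddBelow ({1} ∪ {u ∈ Icc (0 : ℝ) 1 | v ≤ h u}) := by
  refine ⟨0, ?_⟩
  rintro _ (rfl | hu)
  exacts [zero_le_one, hu.1.1]

lemma Xinv_nonneg (h : ℝ → ℝ) (v : ℝ) : 0 ≤ Xinv h v := by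
  refine le_csInf ⟨1, Or.inl rfl⟩ ?_
  rintro _ (rfl | hu)
  exacts [zero_le_one, hu.1.1]

lemma Xinv_le_one (h : ℝ → ℝ) (v : ℝ) : Xinv h v ≤ 1 :=
  csInf_le (bddBelow_Xinv_set h v) (Or.inl rfl)

lemma monotone_Xinv (h : ℝ → ℝ) : Monotone (Xinv h) := fun v _ hvw =>
  csInf_le_csInf (bddBelow_Xinv_set h v) ⟨1, Or.inl rfl⟩
    (union_subset_union_right _ fun _ hu => ⟨hu.1, hvw.trans hu.2⟩)

lemma MemX.Xinv_le_of_le_rm (hh : MemX h) (hw : 0 ≤ w) (hv : v ≤ rm h w) : Xinv h v ≤ w := by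
  refine le_of_forall_gt_imp_ge_of_dense fun s hs => ?_
  rcases le_or_gt s 1 with hs1 | hs1
  · exact csInf_le (bddBelow_Xinv_set h v)
      (Or.inr ⟨⟨hw.trans hs.le, hs1⟩, hh.le_of_le_rm hw hv ⟨hs, hs1⟩⟩)
  · exact (Xinv_le_one h v).trans hs1.le

/-- The primitive `v ↦ ∫₀ᵛ h⁻¹` of the generalized inverse, in terms of which
`Φ(hf, hg; u, v) = invPrimitive hg u + invPrimitive hf v - u * v`. -/
def invPrimitive (h : ℝ → ℝ) (v : ℝ) : ℝ := ∫ x in (0 : ℝ)..v, Xinv h x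

lemma Pot_eq_invPrimitive (hf hg : ℝ → ℝ) (u v : ℝ) :
    Pot hf hg u v = invPrimitive hg u + invPrimitive hf v - u * v :=
  rfl

lemma invPrimitive_zero (h : ℝ → ℝ) : invPrimitive h 0 = 0 :=
  intervalIntegral.integral_same

lemma continuous_invPrimitive (h : ℝ → ℝ) : Continuous (invPrimitive h) :=
  intervalIntegral.continuous_primitive (fun _ _ => (monotone_Xinv h).intervalIntegrable) 0

lemma invPrimitive_sub (h : ℝ → ℝ) (v w : ℝ) :
    invPrimitive h w - invPrimitive h v = ∫ x in v..w, Xinv h x :=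
  intervalIntegral.integral_interval_sub_left (monotone_Xinv h).intervalIntegrable
    (monotone_Xinv h).intervalIntegrable

lemma monotone_invPrimitive (h : ℝ → ℝ) : Monotone (invPrimitive h) := fun v w hvw => by
  rw [← sub_nonneg, invPrimitive_sub]
  exact intervalIntegral.integral_nonneg hvw fun x _ => Xinv_nonneg h x

lemma MemX.invPrimitive_sub_le (hh : MemX h) (huv : u ≤ v) (hw : 0 ≤ w) (hv : v ≤ rm h w) :
    invPrimitive h v - invPrimitive h u ≤ w * (v - u) := by
  rw [invPrimitive_sub]
  have hle := intervalIntegral.integral_mono_on (μ := volume) huv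
    (monotone_Xinv h).intervalIntegrable (intervalIntegrable_const (c := w))
    fun x hx => hh.Xinv_le_of_le_rm hw (hx.2.trans hv)
  rwa [intervalIntegral.integral_const, smul_eq_mul, mul_comm] at hle

lemma MemX.invPrimitive_le_mul (hh : MemX h) (hv0 : 0 ≤ v) (hw : 0 ≤ w) (hv : v ≤ rm h w) :
    invPrimitive h v ≤ w * v := by
  simpa only [invPrimitive_zero, sub_zero] using hh.invPrimitive_sub_le hv0 hw hv

lemma MemX.invPrimitive_lt_mul (hh : MemX h) (hpos : ∀ x ∈ Ioc (0 : ℝ) 1, 0 < h x) (hv0 : 0 < v)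
    (hw : w ∈ Ioc (0 : ℝ) 1) (hv : v ≤ rm h w) : invPrimitive h v < w * v := by
  have hhalf : w / 2 ∈ Ioc (0 : ℝ) 1 := ⟨half_pos hw.1, (half_le_self hw.1.le).trans hw.2⟩
  obtain ⟨b, hb0, hbv, hbh⟩ : ∃ b, 0 < b ∧ b ≤ v ∧ b ≤ h (w / 2) :=
    ⟨min v (h (w / 2)), lt_min hv0 (hpos _ hhalf), min_le_left _ _, min_le_right _ _⟩
  have hlow : invPrimitive h b ≤ w / 2 * b :=
    hh.invPrimitive_le_mul hb0.le hhalf.1.le (hbh.trans (hh.le_rm ⟨hhalf.1.le, hhalf.2⟩))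
  have hhigh : invPrimitive h v - invPrimitive h b ≤ w * (v - b) :=
    hh.invPrimitive_sub_le hbv hw.1.le hv
  linarith [mul_pos hw.1 hb0]

end GeneralizedInverse

section PotentialInequality

variable {ω p q hf hg F G : ℝ → ℝ} {a b c d δ φ γ : ℝ}

lemma Interpolates.continuous_comp {P : ℝ → ℝ} (hP : Continuous P) (hp : Interpolates p a b) :
    Interpolates (P ∘ p) (P a) (P b) :=
  ⟨(hP.tendsto a).comp hp.1, (hP.tendsto b).comp hp.2⟩

lemma MemPsi.exists_interpolates (hp : MemPsi p) : ∃ a b, Interpolates p a b :=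
  ⟨_, _, tendsto_atBot_ciInf hp.1 ⟨0, forall_mem_range.2 fun x => (hp.2 x).1⟩,
    tendsto_atTop_ciSup hp.1 ⟨1, forall_mem_range.2 fun x => (hp.2 x).2⟩⟩

lemma integral_conv_mul_fwdDiff_add (hω : IsSymmetricDensity ω) (hp : MemPsi p) (hq : MemPsi q)
    (hpl : Interpolates p a b) (hql : Interpolates q c d) (hδ : 0 ≤ δ) :
    (∫ x, conv q ω x * fwdDiff δ p x) + ∫ x, conv p ω (x + δ) * fwdDiff δ q x =
      δ * (b * d - a * c) := by
  have hqω := hq.conv hω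
  have hqωl := hql.conv hω hq.isProfile
  have hdp := integrable_fwdDiff_of_monotone hp.1 hpl hδ
  have hdq := integrable_fwdDiff_of_monotone hq.1 hql hδ
  have hdqω := integrable_fwdDiff_of_monotone hqω.1 hqωl hδ
  have hadjoint : ∫ x, conv p ω (x + δ) * fwdDiff δ q x =
      ∫ x, p (x + δ) * fwdDiff δ (conv q ω) x := by
    simp only [← conv_comp_add, ← conv_fwdDiff hq.isProfile hω.integrable]
    exact integral_conv_mul_eq_integral_mul_conv (hp.isProfile.comp_add δ) hdq hω.integrable
      hω.even
  rw [hadjoint, ← integral_add (hqω.isProfile.integrable_mul hdp)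
    ((hp.isProfile.comp_add δ).integrable_mul hdqω)]
  have hmono : Monotone fun x => p x * conv q ω x :=
    hp.1.mul hqω.1 (fun x => (hp.2 x).1) (fun x => (hqω.2 x).1)
  rw [← integral_fwdDiff_of_monotone hmono ⟨hpl.1.mul hqωl.1, hpl.2.mul hqωl.2⟩ hδ]
  congr! 2 with x
  simp only [fwdDiff]
  ring

lemma integral_conv_add_mul_fwdDiff_le (hω : IsSymmetricDensity ω) (hp : IsProfile p)
    (hq : Monotone q) (hql : Interpolates q a b) (hδ : 0 ≤ δ) :
    ∫ x, conv p ω (x + δ) * fwdDiff δ q x ≤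
      (∫ x, conv p ω x * fwdDiff δ q x) + (∫ x, |fwdDiff δ ω x|) * (δ * (b - a)) := by
  have hdq := integrable_fwdDiff_of_monotone hq hql hδ
  have hpω := hp.conv hω
  rw [← integral_fwdDiff_of_monotone hq hql hδ, ← integral_const_mul,
    ← integral_add (hpω.integrable_mul hdq) (hdq.const_mul _)]
  refine integral_mono ((hpω.comp_add δ).integrable_mul hdq)
    ((hpω.integrable_mul hdq).add (hdq.const_mul _)) fun x => ?_
  have hmodulus : conv p ω (x + δ) ≤ conv p ω x + ∫ y, |fwdDiff δ ω y| :=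
    sub_le_iff_le_add'.1 (le_of_abs_le (abs_fwdDiff_conv_le hp hω.integrable δ x))
  simpa only [add_mul] using
    mul_le_mul_of_nonneg_right hmodulus (fwdDiff_nonneg_of_monotone hq hδ x)

/-- A pair of monotone profiles lying below its own image under the terminated recursion; the
right limits `hf(·+)`, `hg(·+)` make the notion closed under decreasing pointwise limits. -/
structure IsTerminatedSubsolution (ω hf hg F G : ℝ → ℝ) : Prop where
  left : MemPsi F
  right : MemPsi G
  left_eq_zero : ∀ x < 0, F x = 0
  left_le : ∀ x, 0 ≤ x → F x ≤ rm hf (conv G ω x)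
  right_le : ∀ x, G x ≤ rm hg (conv F ω x)

namespace IsTerminatedSubsolution

lemma tendsto_left_atBot (hFG : IsTerminatedSubsolution ω hf hg F G) :
    Tendsto F atBot (nhds 0) :=
  tendsto_const_nhds.congr'
    ((eventually_lt_atBot 0).mono fun x hx => (hFG.left_eq_zero x hx).symm)

lemma boundary_gain_le (hFG : IsTerminatedSubsolution ω hf hg F G) (hω : IsSymmetricDensity ω)
    (hhf : MemX hf) {x : ℝ} (hx : 0 ≤ x) :
    conv G ω 0 * F 0 - invPrimitive hf (F 0) ≤ conv G ω x * F x - invPrimitive hf (F x) := by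
  have hconv := hFG.right.conv hω
  have hsub := hhf.invPrimitive_sub_le (hFG.left.1 hx) (hconv.2 x).1 (hFG.left_le x hx)
  linarith [mul_le_mul_of_nonneg_right (hconv.1 hx) (hFG.left.2 0).1]

lemma fwdDiff_invPrimitive_left_add_le (hFG : IsTerminatedSubsolution ω hf hg F G)
    (hω : IsSymmetricDensity ω) (hhf : MemX hf) (hδ : 0 ≤ δ) (x : ℝ) :
    fwdDiff δ (invPrimitive hf ∘ F) x +
        (Ico (-δ) 0).indicator (fun _ => conv G ω 0 * F 0 - invPrimitive hf (F 0)) x ≤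
      conv G ω (x + δ) * fwdDiff δ F x := by
  simp only [fwdDiff, Function.comp_apply]
  rcases lt_or_ge (x + δ) 0 with hneg | hnonneg
  · rw [indicator_of_notMem fun hx => by linarith [hx.1], hFG.left_eq_zero _ hneg,
      hFG.left_eq_zero x (by linarith)]
    simp
  rcases lt_or_ge x 0 with hx | hx
  · rw [indicator_of_mem (show x ∈ Ico (-δ) 0 from ⟨by linarith, hx⟩),
      hFG.left_eq_zero x hx, invPrimitive_zero]
    linarith [hFG.boundary_gain_le hω hhf hnonneg]
  · rw [indicator_of_notMem fun hx' => by linarith [hx'.2], add_zero]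
    exact hhf.invPrimitive_sub_le (hFG.left.1 (le_add_of_nonneg_right hδ))
      ((hFG.right.conv hω).2 _).1 (hFG.left_le _ hnonneg)

lemma mul_invPrimitive_left_add_le (hFG : IsTerminatedSubsolution ω hf hg F G)
    (hω : IsSymmetricDensity ω) (hhf : MemX hf) (hφ : Tendsto F atTop (nhds φ)) (hδ : 0 ≤ δ) :
    δ * (invPrimitive hf φ + (conv G ω 0 * F 0 - invPrimitive hf (F 0))) ≤
      ∫ x, conv G ω (x + δ) * fwdDiff δ F x := by
  have hF : Interpolates F 0 φ := ⟨hFG.tendsto_left_atBot, hφ⟩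
  have hmono := (monotone_invPrimitive hf).comp hFG.left.1
  have hlim := hF.continuous_comp (continuous_invPrimitive hf)
  have hind : Integrable ((Ico (-δ) 0).indicator
      fun _ => conv G ω 0 * F 0 - invPrimitive hf (F 0)) :=
    (integrable_indicator_iff measurableSet_Ico).2 (integrableOn_const (by simp))
  have hle := integral_mono ((integrable_fwdDiff_of_monotone hmono hlim hδ).add hind)
    (((hFG.right.conv hω).isProfile.comp_add δ).integrable_mul
      (integrable_fwdDiff_of_monotone hFG.left.1 hF hδ))
    (hFG.fwdDiff_invPrimitive_left_add_le hω hhf hδ)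
  simp only [Pi.add_apply] at hle
  rw [integral_add (integrable_fwdDiff_of_monotone hmono hlim hδ) hind,
    integral_fwdDiff_of_monotone hmono hlim hδ, integral_indicator measurableSet_Ico,
    invPrimitive_zero] at hle
  simpa [hδ, mul_add] using hle

lemma invPrimitive_right_atBot_nonpos (hFG : IsTerminatedSubsolution ω hf hg F G)
    (hω : IsSymmetricDensity ω) (hhg : MemX hg) (hG : Tendsto G atBot (nhds a)) :
    invPrimitive hg a ≤ 0 := by
  obtain ⟨-, φ, -, hφ⟩ := hFG.left.exists_interpolates
  have hFω := (Interpolates.conv hω hFG.left.isProfile ⟨hFG.tendsto_left_atBot, hφ⟩).1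
  have hbound : ∀ x, invPrimitive hg (G x) ≤ conv F ω x * G x := fun x =>
    hhg.invPrimitive_le_mul (hFG.right.2 x).1 ((hFG.left.conv hω).2 x).1 (hFG.right_le x)
  simpa only [zero_mul] using le_of_tendsto_of_tendsto'
    (((continuous_invPrimitive hg).tendsto a).comp hG) (hFω.mul hG) hbound

lemma mul_invPrimitive_right_le (hFG : IsTerminatedSubsolution ω hf hg F G)
    (hω : IsSymmetricDensity ω) (hhg : MemX hg) (hG : Interpolates G a γ) (hδ : 0 ≤ δ) :
    δ * invPrimitive hg γ ≤ ∫ x, conv F ω (x + δ) * fwdDiff δ G x := by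
  have hmono := (monotone_invPrimitive hg).comp hFG.right.1
  have hlim := hG.continuous_comp (continuous_invPrimitive hg)
  have hFω := hFG.left.conv hω
  have hle := integral_mono (integrable_fwdDiff_of_monotone hmono hlim hδ)
    ((hFω.isProfile.comp_add δ).integrable_mul
      (integrable_fwdDiff_of_monotone hFG.right.1 hG hδ))
    fun x => hhg.invPrimitive_sub_le (hFG.right.1 (le_add_of_nonneg_right hδ)) (hFω.2 _).1
      (hFG.right_le (x + δ))
  rw [integral_fwdDiff_of_monotone hmono hlim hδ] at hle
  linarith [mul_nonpos_of_nonneg_of_nonpos hδ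
    (hFG.invPrimitive_right_atBot_nonpos hω hhg hG.1)]

lemma Pot_add_boundary_gain_le (hFG : IsTerminatedSubsolution ω hf hg F G)
    (hω : IsSymmetricDensity ω) (hhf : MemX hf) (hhg : MemX hg) (hφ : Tendsto F atTop (nhds φ))
    (hγ : Tendsto G atTop (nhds γ)) (hδ : 0 < δ) :
    Pot hf hg γ φ + (conv G ω 0 * F 0 - invPrimitive hf (F 0)) ≤
      (∫ x, |fwdDiff δ ω x|) * φ := by
  obtain ⟨a, γ', hG⟩ := hFG.right.exists_interpolates
  obtain rfl := tendsto_nhds_unique hγ hG.2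
  have hF : Interpolates F 0 φ := ⟨hFG.tendsto_left_atBot, hφ⟩
  have hleft := hFG.mul_invPrimitive_left_add_le hω hhf hφ hδ.le
  have hright := hFG.mul_invPrimitive_right_le hω hhg hG hδ.le
  have hshift := integral_conv_add_mul_fwdDiff_le hω hFG.right.isProfile hFG.left.1 hF hδ.le
  have hparts := integral_conv_mul_fwdDiff_add hω hFG.left hFG.right hF hG hδ.le
  rw [Pot_eq_invPrimitive]
  refine le_of_mul_le_mul_left ?_ hδ
  linarith

lemma Pot_le_neg_boundary_gain (hFG : IsTerminatedSubsolution ω hf hg F G)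
    (hω : IsSymmetricDensity ω) (hhf : MemX hf) (hhg : MemX hg) (hφ : Tendsto F atTop (nhds φ))
    (hγ : Tendsto G atTop (nhds γ)) :
    Pot hf hg γ φ ≤ -(conv G ω 0 * F 0 - invPrimitive hf (F 0)) := by
  have hmodulus := ((tendsto_integral_abs_fwdDiff_zero hω.integrable).mul_const φ).mono_left
    (nhdsWithin_le_nhds (s := Ioi 0))
  rw [zero_mul] at hmodulus
  linarith [ge_of_tendsto hmodulus (eventually_nhdsWithin_of_forall fun δ hδ =>
    hFG.Pot_add_boundary_gain_le hω hhf hhg hφ hγ hδ)]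

end IsTerminatedSubsolution

end PotentialInequality

section Vanishing

variable {ω hf hg F G : ℝ → ℝ}

lemma MemPsi.limit_mem_Icc {p : ℝ → ℝ} {c : ℝ} {l : Filter ℝ} [l.NeBot] (hp : MemPsi p)
    (hc : Tendsto p l (nhds c)) : c ∈ Icc (0 : ℝ) 1 :=
  isClosed_Icc.mem_of_tendsto hc (Eventually.of_forall hp.2)

namespace IsTerminatedSubsolution

lemma left_eq_zero_of_Pot_pos (hFG : IsTerminatedSubsolution ω hf hg F G)
    (hω : IsSymmetricDensity ω) (hhf : MemX hf) (hhg : MemX hg)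
    (hPot : ∀ u ∈ Icc (0 : ℝ) 1, ∀ v ∈ Icc (0 : ℝ) 1, ¬(u = 0 ∧ v = 0) → 0 < Pot hf hg u v)
    (x : ℝ) : F x = 0 := by
  obtain ⟨-, φ, -, hφ⟩ := hFG.left.exists_interpolates
  obtain ⟨-, γ, -, hγ⟩ := hFG.right.exists_interpolates
  have hgain : invPrimitive hf (F 0) ≤ conv G ω 0 * F 0 :=
    hhf.invPrimitive_le_mul (hFG.left.2 0).1 ((hFG.right.conv hω).2 0).1 (hFG.left_le 0 le_rfl)
  have hnonpos : Pot hf hg γ φ ≤ 0 := by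
    linarith [hFG.Pot_le_neg_boundary_gain hω hhf hhg hφ hγ]
  have hφ0 : φ = 0 := by
    by_contra hne
    exact hnonpos.not_gt (hPot γ (hFG.right.limit_mem_Icc hγ) φ (hFG.left.limit_mem_Icc hφ)
      fun h => hne h.2)
  exact le_antisymm (hφ0 ▸ hFG.left.1.ge_of_tendsto hφ x) (hFG.left.2 x).1

lemma left_zero_eq_zero (hFG : IsTerminatedSubsolution ω hf hg F G) (hω : IsSymmetricDensity ω)
    (hhf : MemX hf) (hhg : MemX hg) (hfpos : ∀ x ∈ Ioc (0 : ℝ) 1, 0 < hf x)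
    (hPot : ∀ u ∈ Icc (0 : ℝ) 1, ∀ v ∈ Icc (0 : ℝ) 1, 0 ≤ Pot hf hg u v)
    (hprop : 0 < F 0 → 0 < conv G ω 0) : F 0 = 0 := by
  obtain ⟨-, φ, -, hφ⟩ := hFG.left.exists_interpolates
  obtain ⟨-, γ, -, hγ⟩ := hFG.right.exists_interpolates
  by_contra hne
  have hF0 : 0 < F 0 := (hFG.left.2 0).1.lt_of_ne' hne
  have hgain : invPrimitive hf (F 0) < conv G ω 0 * F 0 :=
    hhf.invPrimitive_lt_mul hfpos hF0 ⟨hprop hF0, ((hFG.right.conv hω).2 0).2⟩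
      (hFG.left_le 0 le_rfl)
  linarith [hFG.Pot_le_neg_boundary_gain hω hhf hhg hφ hγ,
    hPot γ (hFG.right.limit_mem_Icc hγ) φ (hFG.left.limit_mem_Icc hφ)]

end IsTerminatedSubsolution

/-- A monotone fixed point of the terminated recursion, up to the choice of values of `hf` and
`hg` at their jumps: the image of the pair is squeezed between `hf(·)` and `hf(·+)`, and likewise
for `hg`. -/
structure IsTerminatedFixedPoint (ω hf hg F G : ℝ → ℝ) : Prop
    extends IsTerminatedSubsolution ω hf hg F G where
  left_ge : ∀ x, 0 ≤ x → hf (conv G ω x) ≤ F x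
  right_ge : ∀ x, hg (conv F ω x) ≤ G x

namespace IsTerminatedFixedPoint

lemma conv_right_pos (hFG : IsTerminatedFixedPoint ω hf hg F G) (hω : IsSymmetricDensity ω)
    (hgpos : ∀ x ∈ Ioc (0 : ℝ) 1, 0 < hg x) {ε : ℝ} (hε : 0 ≤ ε)
    (hspread : ∀ p, MemPsi p → ∀ x, 0 < p (x + ε) → 0 < conv p ω x) {x : ℝ}
    (hx : 0 < F (x + ε)) : 0 < conv G ω x := by
  have hFω := hFG.left.conv hω
  have hG : 0 < G x :=
    (hgpos _ ⟨hspread F hFG.left x hx, (hFω.2 x).2⟩).trans_le (hFG.right_ge x)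
  exact hspread G hFG.right x (hG.trans_le (hFG.right.1 (le_add_of_nonneg_right hε)))

lemma left_add_eq_zero (hFG : IsTerminatedFixedPoint ω hf hg F G) (hω : IsSymmetricDensity ω)
    (hfpos : ∀ x ∈ Ioc (0 : ℝ) 1, 0 < hf x) (hgpos : ∀ x ∈ Ioc (0 : ℝ) 1, 0 < hg x)
    {ε : ℝ} (hε : 0 ≤ ε) (hspread : ∀ p, MemPsi p → ∀ x, 0 < p (x + ε) → 0 < conv p ω x) {x : ℝ}
    (hx : 0 ≤ x) (hFx : F x = 0) : F (x + ε) = 0 := by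
  by_contra hne
  have hGω : 0 < conv G ω x :=
    hFG.conv_right_pos hω hgpos hε hspread ((hFG.left.2 _).1.lt_of_ne' hne)
  linarith [hfpos _ ⟨hGω, ((hFG.right.conv hω).2 x).2⟩, hFG.left_ge x hx]

lemma left_eq_zero_of_Pot_nonneg (hFG : IsTerminatedFixedPoint ω hf hg F G)
    (hω : IsSymmetricDensity ω) (hhf : MemX hf) (hhg : MemX hg)
    (hfpos : ∀ x ∈ Ioc (0 : ℝ) 1, 0 < hf x) (hgpos : ∀ x ∈ Ioc (0 : ℝ) 1, 0 < hg x)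
    (hPot : ∀ u ∈ Icc (0 : ℝ) 1, ∀ v ∈ Icc (0 : ℝ) 1, 0 ≤ Pot hf hg u v) (x : ℝ) : F x = 0 := by
  obtain ⟨ε, hε, hspread⟩ := exists_pos_forall_conv_pos hω
  have hboundary : F 0 = 0 := hFG.left_zero_eq_zero hω hhf hhg hfpos hPot fun hF0 =>
    hFG.conv_right_pos hω hgpos hε.le hspread
      (hF0.trans_le (hFG.left.1 (le_add_of_nonneg_right hε.le)))
  have hmultiples : ∀ n : ℕ, F (n * ε) = 0 := by
    intro n
    induction n with
    | zero => simpa using hboundary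
    | succ n ih =>
      rw [Nat.cast_succ, add_one_mul]
      exact hFG.left_add_eq_zero hω hfpos hgpos hε.le hspread (by positivity) ih
  obtain ⟨n, hn⟩ := exists_nat_gt (x / ε)
  have hx : F x ≤ F (n * ε) := hFG.left.1 ((div_lt_iff₀ hε).1 hn).le
  exact le_antisymm (hx.trans_eq (hmultiples n)) (hFG.left.2 x).1

end IsTerminatedFixedPoint

end Vanishing

section Recursion

variable {ω h hf hg p q : ℝ → ℝ}

/-- One half-iteration `h ∘ (p ⊗ ω)` of the spatially coupled recursion. -/
def coupledMap (ω h p : ℝ → ℝ) (x : ℝ) : ℝ := h (conv p ω x)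

lemma MemX.measurable_comp (hh : MemX h) (hp : IsProfile p) : Measurable fun x => h (p x) := by
  have hext : Measurable (IccExtend (zero_le_one' ℝ) fun s : Icc (0 : ℝ) 1 => h s) :=
    (Monotone.IccExtend (zero_le_one' ℝ) fun s t hst => hh.1 s.2 t.2 hst).measurable
  convert hext.comp hp.measurable using 2 with x
  exact (IccExtend_of_mem (zero_le_one' ℝ) (fun s : Icc (0 : ℝ) 1 => h s) (hp.mem_Icc x)).symm

lemma IsProfile.coupledMap (hp : IsProfile p) (hω : IsSymmetricDensity ω) (hh : MemX h) :
    IsProfile (coupledMap ω h p) where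
  measurable := hh.measurable_comp (hp.conv hω)
  mem_Icc x := hh.2 ((hp.conv hω).mem_Icc x)

lemma MemPsi.coupledMap (hp : MemPsi p) (hω : IsSymmetricDensity ω) (hh : MemX h) :
    MemPsi (coupledMap ω h p) :=
  ⟨fun x y hxy => hh.1 ((hp.conv hω).2 x) ((hp.conv hω).2 y) ((hp.conv hω).1 hxy),
    fun x => hh.2 ((hp.conv hω).2 x)⟩

lemma coupledMap_le_coupledMap (hω : IsSymmetricDensity ω) (hh : MemX h) (hp : IsProfile p)
    (hq : IsProfile q) (hpq : p ≤ q) : coupledMap ω h p ≤ coupledMap ω h q := fun x =>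
  hh.1 ((hp.conv hω).mem_Icc x) ((hq.conv hω).mem_Icc x) (conv_le_conv hω hp hq hpq x)

/-- The full iteration `f ↦ 𝟙_{[0,∞)} · hf(hg(f ⊗ ω) ⊗ ω)` of the recursion with one-sided
termination. -/
def terminatedMap (ω hf hg p : ℝ → ℝ) : ℝ → ℝ :=
  (Ici 0).indicator (coupledMap ω hf (coupledMap ω hg p))

lemma terminatedMap_of_nonneg {x : ℝ} (hx : 0 ≤ x) :
    terminatedMap ω hf hg p x = coupledMap ω hf (coupledMap ω hg p) x :=
  indicator_of_mem (mem_Ici.2 hx) _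

lemma terminatedMap_of_neg {x : ℝ} (hx : x < 0) : terminatedMap ω hf hg p x = 0 :=
  indicator_of_notMem (notMem_Ici.2 hx) _

lemma IsProfile.indicator_Ici (hp : IsProfile p) : IsProfile ((Ici 0).indicator p) where
  measurable := hp.measurable.indicator measurableSet_Ici
  mem_Icc x := by
    by_cases hx : x ∈ Ici (0 : ℝ)
    · simpa only [indicator_of_mem hx] using hp.mem_Icc x
    · simp [indicator_of_notMem hx]

lemma MemPsi.indicator_Ici (hp : MemPsi p) : MemPsi ((Ici 0).indicator p) := by
  refine ⟨fun x y hxy => ?_, hp.isProfile.indicator_Ici.mem_Icc⟩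
  by_cases hx : x ∈ Ici (0 : ℝ)
  · rw [indicator_of_mem hx, indicator_of_mem (mem_Ici.2 (hx.trans hxy))]
    exact hp.1 hxy
  · rw [indicator_of_notMem hx]
    exact (hp.isProfile.indicator_Ici.mem_Icc y).1

lemma IsProfile.terminatedMap (hp : IsProfile p) (hω : IsSymmetricDensity ω) (hhf : MemX hf)
    (hhg : MemX hg) : IsProfile (terminatedMap ω hf hg p) :=
  ((hp.coupledMap hω hhg).coupledMap hω hhf).indicator_Ici

lemma MemPsi.terminatedMap (hp : MemPsi p) (hω : IsSymmetricDensity ω) (hhf : MemX hf)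
    (hhg : MemX hg) : MemPsi (terminatedMap ω hf hg p) :=
  ((hp.coupledMap hω hhg).coupledMap hω hhf).indicator_Ici

lemma terminatedMap_le_terminatedMap (hω : IsSymmetricDensity ω) (hhf : MemX hf)
    (hhg : MemX hg) (hp : IsProfile p) (hq : IsProfile q) (hpq : p ≤ q) :
    terminatedMap ω hf hg p ≤ terminatedMap ω hf hg q :=
  indicator_mono (coupledMap_le_coupledMap hω hhf (hp.coupledMap hω hhg)
    (hq.coupledMap hω hhg) (coupledMap_le_coupledMap hω hhg hp hq hpq))

/-- The orbit of the terminated recursion started from the largest profile `1`. -/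
def maximalOrbit (ω hf hg : ℝ → ℝ) (t : ℕ) : ℝ → ℝ := (terminatedMap ω hf hg)^[t] 1

lemma maximalOrbit_succ (ω hf hg : ℝ → ℝ) (t : ℕ) :
    maximalOrbit ω hf hg (t + 1) = terminatedMap ω hf hg (maximalOrbit ω hf hg t) :=
  Function.iterate_succ_apply' _ _ _

lemma memPsi_maximalOrbit (hω : IsSymmetricDensity ω) (hhf : MemX hf) (hhg : MemX hg) (t : ℕ) :
    MemPsi (maximalOrbit ω hf hg t) := by
  induction t with
  | zero => exact ⟨monotone_const, fun _ => ⟨zero_le_one, le_rfl⟩⟩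
  | succ t ih => exact maximalOrbit_succ ω hf hg t ▸ ih.terminatedMap hω hhf hhg

lemma isProfile_and_le_maximalOrbit (hω : IsSymmetricDensity ω) (hhf : MemX hf) (hhg : MemX hg)
    {f : ℕ → ℝ → ℝ} (hf0 : IsProfile (f 0)) (hrec : ∀ t, f (t + 1) = terminatedMap ω hf hg (f t))
    (t : ℕ) : IsProfile (f t) ∧ f t ≤ maximalOrbit ω hf hg t := by
  induction t with
  | zero => exact ⟨hf0, fun x => (hf0.mem_Icc x).2⟩
  | succ t ih =>
    rw [hrec, maximalOrbit_succ]
    exact ⟨ih.1.terminatedMap hω hhf hhg, terminatedMap_le_terminatedMap hω hhf hhg ih.1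
      (memPsi_maximalOrbit hω hhf hhg t).isProfile ih.2⟩

lemma antitone_maximalOrbit (hω : IsSymmetricDensity ω) (hhf : MemX hf) (hhg : MemX hg) :
    Antitone (maximalOrbit ω hf hg) := by
  refine antitone_nat_of_succ_le fun t => ?_
  exact (isProfile_and_le_maximalOrbit hω hhf hhg (f := fun t => maximalOrbit ω hf hg (t + 1))
    (memPsi_maximalOrbit hω hhf hhg 1).isProfile (fun t => maximalOrbit_succ ω hf hg (t + 1)) t).2

section Limit

variable {u : ℕ → ℝ → ℝ}

/-- The pointwise infimum of a sequence of profiles, which is its limit when the sequence is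
decreasing. -/
def limitProfile (u : ℕ → ℝ → ℝ) (x : ℝ) : ℝ := ⨅ t, u t x

lemma bddBelow_range_of_memPsi (hu : ∀ t, MemPsi (u t)) (x : ℝ) :
    BddBelow (range fun t => u t x) :=
  ⟨0, forall_mem_range.2 fun t => ((hu t).2 x).1⟩

lemma limitProfile_le (hu : ∀ t, MemPsi (u t)) (t : ℕ) : limitProfile u ≤ u t := fun x =>
  ciInf_le (bddBelow_range_of_memPsi hu x) t

lemma tendsto_limitProfile (hu : ∀ t, MemPsi (u t)) (hanti : Antitone u) (x : ℝ) :
    Tendsto (fun t => u t x) atTop (nhds (limitProfile u x)) :=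
  tendsto_atTop_ciInf (fun _ _ hst => hanti hst x) (bddBelow_range_of_memPsi hu x)

lemma memPsi_limitProfile (hu : ∀ t, MemPsi (u t)) : MemPsi (limitProfile u) :=
  ⟨fun x _ hxy => ciInf_mono (bddBelow_range_of_memPsi hu x) fun t => (hu t).1 hxy,
    fun x => ⟨le_ciInf fun t => ((hu t).2 x).1, (limitProfile_le hu 0 x).trans ((hu 0).2 x).2⟩⟩

lemma coupledMap_limitProfile_le (hω : IsSymmetricDensity ω) (hh : MemX h)
    (hu : ∀ t, MemPsi (u t)) (x : ℝ) :
    coupledMap ω h (limitProfile u) x ≤ limitProfile (fun t => coupledMap ω h (u t)) x :=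
  le_ciInf fun t => coupledMap_le_coupledMap hω hh (memPsi_limitProfile hu).isProfile
    (hu t).isProfile (limitProfile_le hu t) x

lemma limitProfile_coupledMap_le_rm (hω : IsSymmetricDensity ω) (hh : MemX h)
    (hu : ∀ t, MemPsi (u t)) (hanti : Antitone u) (x : ℝ) :
    limitProfile (fun t => coupledMap ω h (u t)) x ≤ rm h (conv (limitProfile u) ω x) := by
  have hcoupled : ∀ t, MemPsi (coupledMap ω h (u t)) := fun t => (hu t).coupledMap hω hh
  refine le_rm_of_forall ((memPsi_limitProfile hcoupled).2 x).2 fun s hs => ?_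
  have hconv := tendsto_conv hω.integrable (fun t => (hu t).isProfile)
    (tendsto_limitProfile hu hanti) x
  obtain ⟨t, ht⟩ := (hconv.eventually_lt_const hs.1).exists
  have hut := ((hu t).conv hω).2 x
  exact (limitProfile_le hcoupled t x).trans (hh.1 hut ⟨hut.1.trans ht.le, hs.2⟩ ht.le)

end Limit

variable (ω hf hg) in
/-- The orbit of the `g`-component accompanying `maximalOrbit`. -/
def maximalCoOrbit (t : ℕ) : ℝ → ℝ := coupledMap ω hg (maximalOrbit ω hf hg t)

lemma memPsi_maximalCoOrbit (hω : IsSymmetricDensity ω) (hhf : MemX hf) (hhg : MemX hg) (t : ℕ) :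
    MemPsi (maximalCoOrbit ω hf hg t) :=
  (memPsi_maximalOrbit hω hhf hhg t).coupledMap hω hhg

lemma antitone_maximalCoOrbit (hω : IsSymmetricDensity ω) (hhf : MemX hf) (hhg : MemX hg) :
    Antitone (maximalCoOrbit ω hf hg) := fun s t hst =>
  coupledMap_le_coupledMap hω hhg (memPsi_maximalOrbit hω hhf hhg t).isProfile
    (memPsi_maximalOrbit hω hhf hhg s).isProfile (antitone_maximalOrbit hω hhf hhg hst)

lemma limitProfile_maximalOrbit_of_neg (hω : IsSymmetricDensity ω) (hhf : MemX hf)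
    (hhg : MemX hg) {x : ℝ} (hx : x < 0) : limitProfile (maximalOrbit ω hf hg) x = 0 := by
  have horbit := memPsi_maximalOrbit hω hhf hhg
  refine le_antisymm ((limitProfile_le horbit 1 x).trans_eq ?_) ((memPsi_limitProfile horbit).2 x).1
  rw [maximalOrbit_succ, terminatedMap_of_neg hx]

lemma limitProfile_maximalOrbit_of_nonneg (hω : IsSymmetricDensity ω) (hhf : MemX hf)
    (hhg : MemX hg) {x : ℝ} (hx : 0 ≤ x) :
    limitProfile (maximalOrbit ω hf hg) x =
      limitProfile (fun t => coupledMap ω hf (maximalCoOrbit ω hf hg t)) x := by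
  have hco := memPsi_maximalCoOrbit hω hhf hhg
  have hshift := (tendsto_add_atTop_iff_nat 1).2 (tendsto_limitProfile
    (memPsi_maximalOrbit hω hhf hhg) (antitone_maximalOrbit hω hhf hhg) x)
  simp only [maximalOrbit_succ, terminatedMap_of_nonneg hx] at hshift
  refine tendsto_nhds_unique hshift (tendsto_limitProfile (fun t => (hco t).coupledMap hω hhf)
    (fun s t hst => ?_) x)
  exact coupledMap_le_coupledMap hω hhf (hco t).isProfile (hco s).isProfile
    (antitone_maximalCoOrbit hω hhf hhg hst)

lemma isTerminatedFixedPoint_limitProfile (hω : IsSymmetricDensity ω) (hhf : MemX hf)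
    (hhg : MemX hg) :
    IsTerminatedFixedPoint ω hf hg (limitProfile (maximalOrbit ω hf hg))
      (limitProfile (maximalCoOrbit ω hf hg)) where
  left := memPsi_limitProfile (memPsi_maximalOrbit hω hhf hhg)
  right := memPsi_limitProfile (memPsi_maximalCoOrbit hω hhf hhg)
  left_eq_zero _ hx := limitProfile_maximalOrbit_of_neg hω hhf hhg hx
  left_le x hx := (limitProfile_maximalOrbit_of_nonneg hω hhf hhg hx).trans_le
    (limitProfile_coupledMap_le_rm hω hhf (memPsi_maximalCoOrbit hω hhf hhg)
      (antitone_maximalCoOrbit hω hhf hhg) x)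
  right_le := limitProfile_coupledMap_le_rm hω hhg (memPsi_maximalOrbit hω hhf hhg)
    (antitone_maximalOrbit hω hhf hhg)
  left_ge x hx := (coupledMap_limitProfile_le hω hhf (memPsi_maximalCoOrbit hω hhf hhg) x).trans_eq
    (limitProfile_maximalOrbit_of_nonneg hω hhf hhg hx).symm
  right_ge := coupledMap_limitProfile_le hω hhg (memPsi_maximalOrbit hω hhf hhg)

lemma tendsto_zero_of_limitProfile_eq_zero (hω : IsSymmetricDensity ω) (hhf : MemX hf)
    (hhg : MemX hg) {f : ℕ → ℝ → ℝ} (hf0 : IsProfile (f 0))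
    (hrec : ∀ t, f (t + 1) = terminatedMap ω hf hg (f t)) {x : ℝ}
    (hlim : limitProfile (maximalOrbit ω hf hg) x = 0) :
    Tendsto (fun t => f t x) atTop (nhds 0) := by
  have horbit := isProfile_and_le_maximalOrbit hω hhf hhg hf0 hrec
  exact squeeze_zero (fun t => ((horbit t).1.mem_Icc x).1) (fun t => (horbit t).2 x)
    (hlim ▸ tendsto_limitProfile (memPsi_maximalOrbit hω hhf hhg)
      (antitone_maximalOrbit hω hhf hhg) x)

end Recursion

theorem continuum_terminated_convergence_general
    (ω hf hg : ℝ → ℝ) (hω : IsSymmetricDensity ω) (hhf : MemX hf) (hhg : MemX hg)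
    (f g : ℕ → ℝ → ℝ) (hmeas : Measurable (f 0)) (hrange : ∀ x, f 0 x ∈ Icc (0 : ℝ) 1)
    (hrecg : ∀ t x, g t x = hg (conv (f t) ω x))
    (hrecf : ∀ t x, f (t + 1) x = if x < 0 then 0 else hf (conv (g t) ω x)) :
    ((∀ u ∈ Icc (0 : ℝ) 1, ∀ v ∈ Icc (0 : ℝ) 1, ¬(u = 0 ∧ v = 0) → 0 < Pot hf hg u v) →
      ∀ x, Tendsto (fun t => f t x) atTop (nhds 0)) ∧
    (((∀ x ∈ Ioc (0 : ℝ) 1, 0 < hf x ∧ 0 < hg x) ∧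
        (∀ u ∈ Icc (0 : ℝ) 1, ∀ v ∈ Icc (0 : ℝ) 1, 0 ≤ Pot hf hg u v)) →
      ∀ x, Tendsto (fun t => f t x) atTop (nhds 0)) := by
  have hrec (t : ℕ) : f (t + 1) = terminatedMap ω hf hg (f t) := by
    have hg_eq : g t = coupledMap ω hg (f t) := funext (hrecg t)
    ext x
    rcases lt_or_ge x 0 with hx | hx
    · rw [hrecf, if_pos hx, terminatedMap_of_neg hx]
    · rw [hrecf, if_neg hx.not_gt, terminatedMap_of_nonneg hx, coupledMap, hg_eq]
  have hfixed := isTerminatedFixedPoint_limitProfile hω hhf hhg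
  constructor
  · intro hPot x
    exact tendsto_zero_of_limitProfile_eq_zero hω hhf hhg ⟨hmeas, hrange⟩ hrec
      (hfixed.left_eq_zero_of_Pot_pos hω hhf hhg hPot x)
  · rintro ⟨hpos, hPot⟩ x
    exact tendsto_zero_of_limitProfile_eq_zero hω hhf hhg ⟨hmeas, hrange⟩ hrec
      (hfixed.left_eq_zero_of_Pot_nonneg hω hhf hhg (fun s hs => (hpos s hs).1)
        (fun s hs => (hpos s hs).2) hPot x)

/-- **Continuum terminated convergence.** -/
theorem continuum_terminated_convergence
    (ω hf hg : ℝ → ℝ)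
    (hω : IsAveragingKernel ω) (hreg : IsRegularKernel ω)
    (hhf : MemX hf) (hhg : MemX hg)
    (f g : ℕ → ℝ → ℝ)
    (hmeas : Measurable (f 0)) (hrange : ∀ x, f 0 x ∈ Icc (0:ℝ) 1)
    (hrecg : ∀ t x, g t x = hg (conv (f t) ω x))
    (hrecf : ∀ t x, f (t + 1) x = if x < 0 then 0 else hf (conv (g t) ω x)) :
    ((∀ u ∈ Icc (0:ℝ) 1, ∀ v ∈ Icc (0:ℝ) 1, ¬(u = 0 ∧ v = 0) →
        0 < Pot hf hg u v) →
      ∀ x, Filter.Tendsto (fun t => f t x) Filter.atTop (nhds 0)) ∧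
    (((∀ x ∈ Ioc (0:ℝ) 1, 0 < hf x ∧ 0 < hg x) ∧
        (∀ u ∈ Icc (0:ℝ) 1, ∀ v ∈ Icc (0:ℝ) 1, 0 ≤ Pot hf hg u v)) →
      ∀ x, Filter.Tendsto (fun t => f t x) Filter.atTop (nhds 0)) :=
  continuum_terminated_convergence_general ω hf hg hω.isSymmetricDensity hhf hhg f g hmeas hrange
    hrecg hrecf
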